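/- For every fixed d ≥ 0, the number of permutations of {1,…,n} with exactly d kinks is asymptotically equivalent, as n → ∞, to 2^{n−2d−1}·(d+1)^n; that is, the limit of #F_n^d / (2^{n−2d−1}(d+1)^n) as n → ∞ equals 1. -/

import Mathlib

open scoped Classical

noncomputable def numKinks {n : ℕ} (π : Equiv.Perm (Fin n)) : ℕ :=
  (Finset.univ.filter (fun i : Fin n =>
    0 < (i : ℕ) ∧ ∀ j : Fin n, (j : ℕ) < (i : ℕ) →
      (π j : ℕ) + 1 ≠ (π i : ℕ) ∧ (π i : ℕ) + 1 ≠ (π j : ℕ))).card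

noncomputable def F (n d : ℕ) : ℕ :=
  (Finset.univ.filter (fun π : Equiv.Perm (Fin n) => numKinks π = d)).card

/-!
Building a permutation by appending entries, the new last value goes into one of the `m + 2` slots
of the `m + 1` values already placed. It turns an earlier non-kink into a kink exactly when it
separates a value from the only neighbour placed before it, and with `k` kinks present this happens
for `m - 2k` of the slots. The series `(4X)ᵏ (1 + X)ᵐ⁻²ᵏ / (1 - X)ᵐ⁺²` satisfy the same recursion
under `f ↦ 2 d/dX (X f)`, so their sum over all permutations of `m + 1` values is
`2ᵐ ∑ⱼ (j + 1)ᵐ⁺¹ Xʲ`. Comparing the coefficients of `Xʲ` gives a triangular linear system for the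
numbers of permutations with `d ≤ j` kinks. After normalization its off-diagonal entries are at most
a polynomial in `m` times `((d + 1) / (j + 1))ᵐ`, hence vanish in the limit.
-/

open Filter PowerSeries
open Finset hiding mk

section Slots

variable {n m : ℕ}

/-- The slot `p` of the value set `Fin n` is the gap just below the value `p`, so that the slots `0`
and `n` lie at the two ends. `SlotBetween p a b` says that `a` and `b` are the two values next to
the slot `p`, in either order. -/
def SlotBetween (p : Fin (n + 1)) (a b : Fin n) : Prop :=
  a.succ = p ∧ b.castSucc = p ∨ b.succ = p ∧ a.castSucc = p

theorem slotBetween_comm {p : Fin (n + 1)} {a b : Fin n} :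
    SlotBetween p a b ↔ SlotBetween p b a := or_comm

theorem SlotBetween.eq_and_eq_or_eq_and_eq {p : Fin (n + 1)} {a b c d : Fin n}
    (hab : SlotBetween p a b) (hcd : SlotBetween p c d) : a = c ∧ b = d ∨ a = d ∧ b = c := by
  simp only [SlotBetween, Fin.ext_iff, Fin.val_succ, Fin.val_castSucc] at *
  omega

theorem exists_slotBetween_iff {a b : Fin n} :
    (∃ p, SlotBetween p a b) ↔ (a : ℕ) + 1 = b ∨ (b : ℕ) + 1 = a := by
  simp only [SlotBetween, exists_or, exists_eq_left']
  simp only [Fin.ext_iff, Fin.val_succ, Fin.val_castSucc, eq_comm]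

theorem exists_slotBetween_succAbove_iff {p : Fin (n + 1)} {a b : Fin n} :
    (∃ q, SlotBetween q (p.succAbove a) (p.succAbove b)) ↔ ∃ q, q ≠ p ∧ SlotBetween q a b := by
  rw [exists_slotBetween_iff]
  simp only [SlotBetween, Fin.ext_iff, Fin.succAbove, Fin.lt_def, Fin.val_succ, Fin.val_castSucc]
  constructor
  · intro h
    refine ⟨if (a : ℕ) < b then b.castSucc else a.castSucc, ?_⟩
    grind
  · grind

/-- The slots closed at time `i` when the entries of `π` are placed one after the other: one of the
two values next to the slot is `π i`, the other one has been placed before. Thus `i` is a kink or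
the first position iff it closes no slot. -/
noncomputable def closedSlots (π : Equiv.Perm (Fin n)) (i : Fin n) : Finset (Fin (n + 1)) :=
  {p | ∃ j < i, SlotBetween p (π j) (π i)}

theorem mem_closedSlots {π : Equiv.Perm (Fin n)} {i : Fin n} {p : Fin (n + 1)} :
    p ∈ closedSlots π i ↔ ∃ j < i, SlotBetween p (π j) (π i) := by
  simp only [closedSlots, mem_filter_univ]

theorem closedSlots_eq_empty_iff {π : Equiv.Perm (Fin n)} {i : Fin n} :
    closedSlots π i = ∅ ↔ ∀ j < i, (π j : ℕ) + 1 ≠ π i ∧ (π i : ℕ) + 1 ≠ π j := by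
  simp only [eq_empty_iff_forall_notMem, mem_closedSlots, not_exists, not_and]
  rw [forall_comm]
  refine forall_congr' fun j ↦ ?_
  rw [forall_comm]
  refine forall_congr' fun _ ↦ ?_
  rw [← not_exists, exists_slotBetween_iff, not_or]

theorem pairwiseDisjoint_closedSlots (π : Equiv.Perm (Fin n)) (s : Set (Fin n)) :
    s.PairwiseDisjoint (closedSlots π) := by
  intro i _ k _ hik
  refine disjoint_left.2 fun p hpi hpk ↦ ?_
  obtain ⟨j, hji, hpji⟩ := mem_closedSlots.1 hpi
  obtain ⟨l, hlk, hplk⟩ := mem_closedSlots.1 hpk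
  obtain ⟨-, hik'⟩ | ⟨hjk, hil⟩ := hpji.eq_and_eq_or_eq_and_eq hplk
  · exact hik (π.injective hik')
  · obtain rfl := π.injective hjk
    obtain rfl := π.injective hil
    exact hji.asymm hlk

theorem biUnion_closedSlots (π : Equiv.Perm (Fin n)) :
    univ.biUnion (closedSlots π) = Ioo 0 (Fin.last n) := by
  ext p
  simp only [mem_biUnion, mem_univ, true_and, mem_closedSlots, mem_Ioo]
  constructor
  · rintro ⟨i, j, -, hp | hp⟩
    · exact ⟨hp.1 ▸ Fin.succ_pos _, hp.2 ▸ Fin.castSucc_lt_last _⟩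
    · exact ⟨hp.1 ▸ Fin.succ_pos _, hp.2 ▸ Fin.castSucc_lt_last _⟩
  · rintro ⟨hp0, hpn⟩
    obtain ⟨a, ha⟩ := Fin.exists_succ_eq.2 hp0.ne'
    obtain ⟨b, hb⟩ := Fin.exists_castSucc_eq.2 hpn.ne
    have hab : SlotBetween p a b := Or.inl ⟨ha, hb⟩
    have hne : π.symm a ≠ π.symm b := by
      rw [π.symm.injective.ne_iff]
      rintro rfl
      exact Fin.castSucc_lt_succ.ne (hb.trans ha.symm)
    obtain hlt | hlt := hne.lt_or_gt
    · exact ⟨π.symm b, π.symm a, hlt, by simpa using hab⟩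
    · exact ⟨π.symm a, π.symm b, hlt, by simpa using slotBetween_comm.1 hab⟩

theorem sum_card_closedSlots (π : Equiv.Perm (Fin n)) :
    ∑ i, #(closedSlots π i) = n - 1 := by
  rw [← card_biUnion (pairwiseDisjoint_closedSlots π _), biUnion_closedSlots,
    Fin.card_Ioo, Fin.val_last, Fin.val_zero, Nat.sub_zero]

theorem card_closedSlots_le_two (π : Equiv.Perm (Fin n)) (i : Fin n) :
    #(closedSlots π i) ≤ 2 := by
  refine (card_le_card (t := {(π i).castSucc, (π i).succ}) fun p hp ↦ ?_).trans card_le_two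
  obtain ⟨j, -, hp | hp⟩ := mem_closedSlots.1 hp
  · simp [← hp.2]
  · simp [← hp.1]

theorem numKinks_add_one (π : Equiv.Perm (Fin (m + 1))) :
    numKinks π + 1 = #{i | closedSlots π i = ∅} := by
  rw [numKinks, ← card_insert_of_notMem (a := 0) (by simp)]
  congr 1
  ext i
  rw [mem_insert, mem_filter_univ, mem_filter_univ, closedSlots_eq_empty_iff]
  obtain rfl | hi := eq_or_ne i 0
  · simp
  · simp [hi, Nat.pos_iff_ne_zero]

theorem card_filter_card_closedSlots_eq_one (π : Equiv.Perm (Fin (m + 1))) :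
    #{i | #(closedSlots π i) = 1} + 2 * numKinks π = m := by
  have hslot (i : Fin (m + 1)) : (if #(closedSlots π i) = 1 then 1 else 0) +
      2 * (if closedSlots π i = ∅ then 1 else 0) + #(closedSlots π i) = 2 := by
    have := card_closedSlots_le_two π i
    simp only [← card_eq_zero]
    split_ifs <;> omega
  have hsum := sum_congr rfl fun i (_ : i ∈ univ) ↦ hslot i
  rw [sum_add_distrib, sum_add_distrib, ← mul_sum, sum_card_closedSlots, ← card_filter,
    ← card_filter, ← numKinks_add_one] at hsum
  simp only [sum_const, card_univ, Fintype.card_fin, smul_eq_mul] at hsum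
  omega

theorem two_mul_numKinks_le (π : Equiv.Perm (Fin (m + 1))) : 2 * numKinks π ≤ m := by
  have := card_filter_card_closedSlots_eq_one π
  omega

theorem exists_add_one_eq_or_add_one_eq (a : Fin (m + 2)) :
    ∃ b : Fin (m + 2), (b : ℕ) + 1 = a ∨ (a : ℕ) + 1 = b := by
  obtain rfl | ⟨b, rfl⟩ := a.eq_zero_or_eq_succ
  · exact ⟨1, by simp⟩
  · exact ⟨b.castSucc, by simp⟩

theorem closedSlots_last_ne_empty (π : Equiv.Perm (Fin (m + 2))) :
    closedSlots π (Fin.last (m + 1)) ≠ ∅ := by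
  obtain ⟨b, hb⟩ := exists_add_one_eq_or_add_one_eq (π (Fin.last (m + 1)))
  rw [Ne, closedSlots_eq_empty_iff]
  intro h
  have hlt : π.symm b < Fin.last (m + 1) := by
    refine (Fin.le_last _).lt_of_ne fun hlast ↦ ?_
    rw [← hlast, π.apply_symm_apply] at hb
    omega
  have := h _ hlt
  rw [π.apply_symm_apply] at this
  tauto

end Slots

section AppendValue

variable {n m : ℕ}

/-- The one-line notation of `π` with a last entry `p` appended, the old values `≥ p` being shifted
up by one; in other words, the new value is inserted into the slot `p`. -/
def appendValue (p : Fin (n + 1)) (π : Equiv.Perm (Fin n)) : Equiv.Perm (Fin (n + 1)) :=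
  (finSuccEquivLast.trans π.optionCongr).trans (finSuccEquiv' p).symm

theorem appendValue_last (p : Fin (n + 1)) (π : Equiv.Perm (Fin n)) :
    appendValue p π (Fin.last n) = p := by
  simp [appendValue]

theorem appendValue_castSucc (p : Fin (n + 1)) (π : Equiv.Perm (Fin n)) (i : Fin n) :
    appendValue p π i.castSucc = p.succAbove (π i) := by
  simp [appendValue]

theorem appendValue_bijective (n : ℕ) :
    Function.Bijective fun x : Fin (n + 1) × Equiv.Perm (Fin n) ↦ appendValue x.1 x.2 := by
  rw [Fintype.bijective_iff_injective_and_card]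
  refine ⟨?_, by simp [Fintype.card_perm, Nat.factorial_succ]⟩
  rintro ⟨p, π⟩ ⟨q, ρ⟩ (h : appendValue p π = appendValue q ρ)
  obtain rfl : p = q := by rw [← appendValue_last p π, h, appendValue_last]
  obtain rfl : π = ρ := Equiv.ext fun i ↦ p.succAbove_right_injective <| by
    rw [← appendValue_castSucc, h, appendValue_castSucc]
  rfl

theorem closedSlots_appendValue_eq_empty_iff {p : Fin (n + 1)} {π : Equiv.Perm (Fin n)}
    {i : Fin n} :
    closedSlots (appendValue p π) i.castSucc = ∅ ↔ closedSlots π i ⊆ {p} := by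
  rw [← not_iff_not, ← Ne, ← nonempty_iff_ne_empty, not_subset]
  simp only [Finset.Nonempty, mem_closedSlots, mem_singleton]
  constructor
  · rintro ⟨q, j, hj, hq⟩
    obtain ⟨j, rfl⟩ := Fin.exists_castSucc_eq.2 (hj.trans_le (Fin.le_last _)).ne
    rw [appendValue_castSucc, appendValue_castSucc] at hq
    obtain ⟨r, hrp, hr⟩ := exists_slotBetween_succAbove_iff.1 ⟨q, hq⟩
    exact ⟨r, ⟨j, Fin.castSucc_lt_castSucc_iff.1 hj, hr⟩, hrp⟩
  · rintro ⟨r, ⟨j, hj, hr⟩, hrp⟩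
    obtain ⟨q, hq⟩ := exists_slotBetween_succAbove_iff.2 ⟨r, hrp, hr⟩
    refine ⟨q, j.castSucc, Fin.castSucc_lt_castSucc_iff.2 hj, ?_⟩
    rwa [appendValue_castSucc, appendValue_castSucc]

theorem numKinks_appendValue_eq_add_card (p : Fin (m + 2)) (π : Equiv.Perm (Fin (m + 1))) :
    numKinks (appendValue p π) = numKinks π + #{i | closedSlots π i = {p}} := by
  have hempty : #{i | closedSlots (appendValue p π) i = ∅} = #{i | closedSlots π i ⊆ {p}} := by
    rw [Fin.univ_castSuccEmb, filter_cons, if_neg (closedSlots_last_ne_empty _), filter_map,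
      card_map]
    simp [Function.comp_def, closedSlots_appendValue_eq_empty_iff]
  have hdisj : Disjoint (univ.filter (closedSlots π · = ∅)) (univ.filter (closedSlots π · = {p})) :=
    disjoint_filter.2 fun i _ h₀ h₁ ↦ singleton_ne_empty p (h₁.symm.trans h₀)
  simp only [subset_singleton_iff] at hempty
  rw [filter_or, card_union_of_disjoint hdisj, ← numKinks_add_one, ← numKinks_add_one] at hempty
  omega

theorem numKinks_appendValue (p : Fin (m + 2)) (π : Equiv.Perm (Fin (m + 1))) :
    numKinks (appendValue p π) =
      if ∃ i, closedSlots π i = {p} then numKinks π + 1 else numKinks π := by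
  rw [numKinks_appendValue_eq_add_card]
  split_ifs with h
  · obtain ⟨i, hi⟩ := h
    rw [Nat.add_left_cancel_iff, card_eq_one]
    refine ⟨i, eq_singleton_iff_unique_mem.2 ⟨by simpa using hi, fun k hk ↦ ?_⟩⟩
    have hk : closedSlots π k = {p} := by simpa using hk
    refine (pairwiseDisjoint_closedSlots π Set.univ).elim_finset (Set.mem_univ k) (Set.mem_univ i)
      p ?_ ?_ <;> simp [hi, hk]
  · simpa using h

theorem card_filter_exists_closedSlots_eq_singleton (π : Equiv.Perm (Fin n)) :
    #{p | ∃ i, closedSlots π i = {p}} = #{i | #(closedSlots π i) = 1} := by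
  have hunion : ({p | ∃ i, closedSlots π i = {p}} : Finset _) =
      ({i | #(closedSlots π i) = 1} : Finset _).biUnion (closedSlots π) := by
    ext p
    simp only [mem_filter_univ, mem_biUnion, card_eq_one]
    constructor
    · rintro ⟨i, hi⟩
      exact ⟨i, ⟨p, hi⟩, by simp [hi]⟩
    · rintro ⟨i, ⟨q, hq⟩, hp⟩
      obtain rfl : p = q := by simpa [hq] using hp
      exact ⟨i, hq⟩
  rw [hunion, card_biUnion (pairwiseDisjoint_closedSlots π _), card_eq_sum_ones]
  exact sum_congr rfl fun i hi ↦ by simpa using hi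

theorem sum_numKinks_appendValue {M : Type*} [AddCommMonoid M] (f : ℕ → M)
    (π : Equiv.Perm (Fin (m + 1))) :
    ∑ p, f (numKinks (appendValue p π)) =
      (m - 2 * numKinks π) • f (numKinks π + 1) + (2 * numKinks π + 2) • f (numKinks π) := by
  have hnew : #{p | ∃ i, closedSlots π i = {p}} + 2 * numKinks π = m := by
    rw [card_filter_exists_closedSlots_eq_singleton, card_filter_card_closedSlots_eq_one]
  have htotal := card_filter_add_card_filter_not (s := univ) fun p ↦ ∃ i, closedSlots π i = {p}
  rw [card_univ, Fintype.card_fin] at htotal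
  simp only [numKinks_appendValue, apply_ite f]
  rw [sum_ite, sum_const, sum_const]
  congr 2 <;> omega

theorem sum_perm_numKinks {M : Type*} [AddCommMonoid M] (f : ℕ → M) :
    ∑ π : Equiv.Perm (Fin (m + 2)), f (numKinks π) =
      ∑ π : Equiv.Perm (Fin (m + 1)),
        ((m - 2 * numKinks π) • f (numKinks π + 1) + (2 * numKinks π + 2) • f (numKinks π)) := by
  rw [← (appendValue_bijective (m + 1)).sum_comp, Fintype.sum_prod_type_right]
  exact sum_congr rfl fun π _ ↦ sum_numKinks_appendValue f π

end AppendValue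

theorem sum_F_nsmul {M : Type*} [AddCommMonoid M] (n : ℕ) (s : Finset ℕ) (f : ℕ → M) :
    ∑ d ∈ s, F n d • f d = ∑ π : Equiv.Perm (Fin n) with numKinks π ∈ s, f (numKinks π) := by
  rw [← sum_fiberwise_eq_sum_filter']
  exact sum_congr rfl fun d _ ↦ (sum_const _).symm

section KinkWeight

variable (R : Type*) [CommRing R]

theorem derivative_mk_one : d⁄dX R (mk 1) = mk 1 ^ 2 := by
  ext n
  simp [mk_one_pow_eq_mk_choose_add R 1, coeff_derivative, add_comm]

theorem derivative_mk_one_pow (k : ℕ) : d⁄dX R (mk 1 ^ k) = (k : R⟦X⟧) * mk 1 ^ (k + 1) := by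
  rw [derivative_pow, derivative_mk_one]
  cases k with
  | zero => simp
  | succ k => rw [Nat.add_sub_cancel]; ring

/-- The series `(4X)ᵈ (1 + X)ᵐ⁻²ᵈ / (1 - X)ᵐ⁺²` attached to a permutation of `m + 1` values with `d`
kinks. Such a permutation has `2 * d ≤ m`, so the truncated subtraction is a true one there. -/
noncomputable def kinkWeight (m d : ℕ) : R⟦X⟧ :=
  (4 * X) ^ d * (1 + X) ^ (m - 2 * d) * mk 1 ^ (m + 2)

theorem two_mul_derivative_X_mul_kinkWeight {m d : ℕ} (h : 2 * d ≤ m) :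
    2 * d⁄dX R (X * kinkWeight R m d) =
      (m - 2 * d) • kinkWeight R (m + 1) (d + 1) + (2 * d + 2) • kinkWeight R (m + 1) d := by
  obtain ⟨a, rfl⟩ := Nat.exists_eq_add_of_le h
  have hsplit : X * kinkWeight R (2 * d + a) d =
      ((4 ^ d : ℕ) : R⟦X⟧) * (X ^ (d + 1) * ((1 + X) ^ a * mk 1 ^ (2 * d + a + 2))) := by
    rw [kinkWeight, Nat.add_sub_cancel_left]
    push_cast
    ring
  have hgeom : (mk 1 : R⟦X⟧) ^ (2 * d + a + 2) = mk 1 ^ (2 * d + a + 3) * (1 - X) := by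
    rw [pow_succ _ (2 * d + a + 2), mul_assoc, mk_one_mul_one_sub_eq_one, mul_one]
  simp only [hsplit, Derivation.leibniz, Derivation.map_natCast, derivative_mk_one_pow,
    smul_eq_mul]
  simp only [derivative_pow, map_add, derivative_X, derivative_one, hgeom, kinkWeight,
    nsmul_eq_mul]
  rw [Nat.add_sub_cancel_left, show 2 * d + a + 1 - 2 * d = a + 1 by omega,
    show 2 * d + a + 1 - 2 * (d + 1) = a - 1 by omega]
  cases a with
  | zero => push_cast; ring
  | succ a => rw [Nat.add_sub_cancel]; push_cast; ring

theorem sum_kinkWeight_succ (m : ℕ) :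
    ∑ π : Equiv.Perm (Fin (m + 2)), kinkWeight R (m + 1) (numKinks π) =
      2 * d⁄dX R (X * ∑ π : Equiv.Perm (Fin (m + 1)), kinkWeight R m (numKinks π)) := by
  rw [sum_perm_numKinks, mul_sum, map_sum, mul_sum]
  exact sum_congr rfl fun π _ ↦
    (two_mul_derivative_X_mul_kinkWeight R (two_mul_numKinks_le π)).symm

theorem coeff_sum_kinkWeight (m j : ℕ) :
    coeff j (∑ π : Equiv.Perm (Fin (m + 1)), kinkWeight R m (numKinks π)) =
      2 ^ m * ((j : R) + 1) ^ (m + 1) := by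
  induction m with
  | zero =>
    have hzero (π : Equiv.Perm (Fin 1)) : numKinks π = 0 := by
      have := two_mul_numKinks_le π
      omega
    simp [hzero, kinkWeight, ← derivative_mk_one, coeff_derivative]
  | succ m ih =>
    rw [sum_kinkWeight_succ, ← map_ofNat C 2, coeff_C_mul, coeff_derivative, coeff_succ_X_mul, ih]
    ring

theorem coeff_kinkWeight (m d j : ℕ) :
    coeff j (kinkWeight R m d) =
      if d ≤ j then 4 ^ d * coeff (j - d) ((1 + X) ^ (m - 2 * d) * mk 1 ^ (m + 2) : R⟦X⟧)
      else 0 := by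
  have hsplit : kinkWeight R m d =
      C (4 ^ d) * (X ^ d * ((1 + X) ^ (m - 2 * d) * mk 1 ^ (m + 2))) := by
    rw [kinkWeight, map_pow, map_ofNat]
    ring
  rw [hsplit, coeff_C_mul, coeff_X_pow_mul', mul_ite, mul_zero]

theorem coeff_kinkWeight_of_lt {m d j : ℕ} (h : j < d) : coeff j (kinkWeight R m d) = 0 := by
  rw [coeff_kinkWeight, if_neg h.not_ge]

theorem coeff_self_kinkWeight (m d : ℕ) : coeff d (kinkWeight R m d) = 4 ^ d := by
  simp [coeff_kinkWeight]

theorem sum_F_mul_coeff_kinkWeight (m j : ℕ) :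
    ∑ d ∈ range (j + 1), (F (m + 1) d : R) * coeff j (kinkWeight R m d) =
      2 ^ m * ((j : R) + 1) ^ (m + 1) := by
  rw [← coeff_sum_kinkWeight, map_sum]
  simp only [← nsmul_eq_mul]
  rw [sum_F_nsmul, sum_filter_of_ne]
  intro π _ hπ
  by_contra hj
  exact hπ (coeff_kinkWeight_of_lt R (by simpa [Nat.lt_succ_iff] using hj))

end KinkWeight

section CoeffBound

variable {R : Type*} [CommSemiring R] [PartialOrder R] [IsOrderedRing R]

theorem coeff_mul_mem_Icc_of_coeff_mem_Icc {f g : R⟦X⟧} {s : R}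
    (hf : ∀ k, coeff k f ∈ Set.Icc 0 (s ^ k)) (hg : ∀ k, coeff k g ∈ Set.Icc 0 1) (k : ℕ) :
    coeff k (f * g) ∈ Set.Icc 0 ((s + 1) ^ k) := by
  rw [coeff_mul]
  refine ⟨sum_nonneg fun x _ ↦ mul_nonneg (hf _).1 (hg _).1, ?_⟩
  have hterm : ∀ x ∈ antidiagonal k, coeff x.1 f * coeff x.2 g ≤ k.choose x.1 • s ^ x.1 := by
    intro x hx
    have hs : 0 ≤ s ^ x.1 := (hf x.1).1.trans (hf x.1).2
    have hchoose : 1 ≤ k.choose x.1 := Nat.choose_pos (Nat.le.intro (mem_antidiagonal.1 hx))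
    calc coeff x.1 f * coeff x.2 g
        ≤ s ^ x.1 * 1 := mul_le_mul (hf _).2 (hg _).2 (hg _).1 hs
      _ = 1 • s ^ x.1 := by rw [mul_one, one_smul]
      _ ≤ k.choose x.1 • s ^ x.1 := nsmul_le_nsmul_left hs hchoose
  calc ∑ x ∈ antidiagonal k, coeff x.1 f * coeff x.2 g
      ≤ ∑ x ∈ antidiagonal k, k.choose x.1 • s ^ x.1 := sum_le_sum hterm
    _ = (s + 1) ^ k := by simp [(Commute.one_right s).add_pow']

theorem coeff_one_add_X_pow_mul_mk_one_pow_mem_Icc (a b k : ℕ) :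
    coeff k ((1 + X) ^ a * mk 1 ^ b : R⟦X⟧) ∈ Set.Icc 0 (((a + b : ℕ) : R) ^ k) := by
  have hone (k : ℕ) : coeff k (1 + X : R⟦X⟧) ∈ Set.Icc 0 1 := by
    obtain _ | _ | k := k <;> simp [coeff_X, coeff_one]
  have hgeom (k : ℕ) : coeff k (mk 1 : R⟦X⟧) ∈ Set.Icc 0 1 := by simp
  induction a generalizing k with
  | zero =>
    induction b generalizing k with
    | zero => cases k <;> simp [coeff_one]
    | succ b ih => simpa [pow_succ] using coeff_mul_mem_Icc_of_coeff_mem_Icc ih hgeom k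
  | succ a ih =>
    rw [pow_succ, mul_right_comm, Nat.add_right_comm, Nat.cast_succ]
    exact coeff_mul_mem_Icc_of_coeff_mem_Icc ih hone k

end CoeffBound

section Asymptotics

theorem tendsto_one_of_sum_mul_add_eq_one {ι R : Type*} [Ring R] [TopologicalSpace R]
    [IsTopologicalRing R] {l : Filter ι} {u : ℕ → ι → R} {ε : ℕ → ℕ → ι → R}
    (hu : ∀ j i, ∑ d ∈ range j, u d i * ε j d i + u j i = 1)
    (hε : ∀ j, ∀ d < j, Tendsto (ε j d) l (nhds 0)) (j : ℕ) : Tendsto (u j) l (nhds 1) := by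
  induction j using Nat.strong_induction_on with
  | _ j ih =>
    have hsum : Tendsto (fun i ↦ ∑ d ∈ range j, u d i * ε j d i) l (nhds 0) := by
      simpa using tendsto_finsetSum (range j) fun d hd ↦
        (ih d (mem_range.1 hd)).mul (hε j d (mem_range.1 hd))
    have huj : u j = fun i ↦ 1 - ∑ d ∈ range j, u d i * ε j d i :=
      funext fun i ↦ eq_sub_of_add_eq' (hu j i)
    simpa [huj] using hsum.const_sub 1

/-- The number of permutations of `n = m + 1` values with `d` kinks, divided by its asymptotic value
`2ⁿ⁻²ᵈ⁻¹ (d + 1)ⁿ = 2ᵐ (d + 1)ᵐ⁺¹ / 4ᵈ`. The shift of the index avoids negative exponents. -/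
noncomputable def kinkRatio (d m : ℕ) : ℝ :=
  F (m + 1) d * 4 ^ d / (2 ^ m * ((d : ℝ) + 1) ^ (m + 1))

/-- The coefficient of `kinkRatio d m` in the identity obtained by dividing
`sum_F_mul_coeff_kinkWeight` at `j` by its right-hand side; it is an error term for `d < j`. -/
noncomputable def kinkError (j d m : ℕ) : ℝ :=
  coeff j (kinkWeight ℝ m d) / 4 ^ d * (((d : ℝ) + 1) / (j + 1)) ^ (m + 1)

theorem sum_kinkRatio_mul_kinkError_add (j m : ℕ) :
    ∑ d ∈ range j, kinkRatio d m * kinkError j d m + kinkRatio j m = 1 := by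
  have hterm (d : ℕ) : kinkRatio d m * kinkError j d m =
      F (m + 1) d * coeff j (kinkWeight ℝ m d) / (2 ^ m * ((j : ℝ) + 1) ^ (m + 1)) := by
    rw [kinkRatio, kinkError, div_pow]
    field_simp
  simp only [hterm]
  rw [kinkRatio, ← coeff_self_kinkWeight ℝ m j, ← sum_div, ← add_div,
    ← sum_range_succ fun d ↦ F (m + 1) d * coeff j (kinkWeight ℝ m d),
    sum_F_mul_coeff_kinkWeight, div_self (by positivity)]

theorem coeff_kinkWeight_div_mem_Icc (m d j : ℕ) :
    coeff j (kinkWeight ℝ m d) / 4 ^ d ∈ Set.Icc 0 ((2 * (m + 1) : ℝ) ^ (j - d)) := by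
  rw [coeff_kinkWeight]
  split_ifs
  · rw [mul_div_cancel_left₀ _ (by positivity)]
    obtain ⟨hnonneg, hle⟩ :=
      coeff_one_add_X_pow_mul_mk_one_pow_mem_Icc (R := ℝ) (m - 2 * d) (m + 2) (j - d)
    refine ⟨hnonneg, hle.trans ?_⟩
    gcongr
    exact_mod_cast (by omega : m - 2 * d + (m + 2) ≤ 2 * (m + 1))
  · rw [zero_div]
    exact Set.left_mem_Icc.2 (by positivity)

theorem tendsto_kinkError {j d : ℕ} (h : d < j) : Tendsto (kinkError j d) atTop (nhds 0) := by
  set r : ℝ := ((d : ℝ) + 1) / (j + 1) with hr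
  have hr0 : 0 ≤ r := by positivity
  have hr1 : r < 1 := by
    rw [hr, div_lt_one (by positivity)]
    exact_mod_cast Nat.succ_lt_succ h
  have hpoly : Tendsto (fun m : ℕ ↦ (2 * (m + 1) : ℝ) ^ (j - d) * r ^ (m + 1)) atTop (nhds 0) := by
    have := ((tendsto_add_atTop_iff_nat 1).2
      (tendsto_pow_const_mul_const_pow_of_lt_one (j - d) hr0 hr1)).const_mul (2 ^ (j - d))
    simpa [mul_pow, mul_assoc] using this
  refine squeeze_zero (fun m ↦ ?_) (fun m ↦ ?_) hpoly
  · exact mul_nonneg (coeff_kinkWeight_div_mem_Icc m d j).1 (by positivity)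
  · exact mul_le_mul_of_nonneg_right (coeff_kinkWeight_div_mem_Icc m d j).2 (by positivity)

theorem kinkRatio_eq (d m : ℕ) :
    kinkRatio d m = (F (m + 1) d : ℝ) /
      ((2 : ℝ) ^ (((m + 1 : ℕ) : ℤ) - 2 * d - 1) * ((d : ℝ) + 1) ^ (m + 1)) := by
  have hexp : ((m + 1 : ℕ) : ℤ) - 2 * d - 1 = (m : ℤ) - (2 * d : ℕ) := by push_cast; ring
  rw [kinkRatio, hexp, zpow_sub₀ two_ne_zero, zpow_natCast, zpow_natCast, pow_mul,
    div_mul_eq_mul_div, div_div_eq_mul_div]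
  norm_num

end Asymptotics

theorem F_asymptotics (d : ℕ) :
    Filter.Tendsto
      (fun n : ℕ => (F n d : ℝ) / ((2 : ℝ) ^ ((n : ℤ) - 2 * d - 1) * ((d : ℝ) + 1) ^ n))
      Filter.atTop (nhds 1) := by
  rw [← tendsto_add_atTop_iff_nat 1]
  refine Tendsto.congr (kinkRatio_eq d) ?_
  exact tendsto_one_of_sum_mul_add_eq_one sum_kinkRatio_mul_kinkError_add
    (fun _ _ ↦ tendsto_kinkError) d
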